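/- arXiv:2306.10922 — 2 statements merged into one kernel-verified Lean document; each statement's English description precedes it below -/
import Mathlib

section
/- Let (X,ρ) be a bounded metric space and μ a Borel probability measure supported on X such that μ(B_ρ(u,r)) ≤ C₁ r^κ for all u ∈ X and all r > 0, for some constants C₁ > 0 and κ > 0. Then for every θ > 0 there exists a constant C₂ > 0 such that for all r ∈ (0, diam(X)): sup_{v ∈ X} ∫_X (max{ρ(u,v), r})^{−θ} dμ(u) ≤ C₂ · φ_{θ−κ}(r). -/
open MeasureTheory Set ENNReal

/-- The radial kernel `φ_α` : `r^{-α}` for `α > 0`, `log(e / (r ⊓ 1))` for `α = 0`,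
and `1` for `α < 0`. -/
noncomputable def radialKernel (α : ℝ) (r : ℝ) : ℝ≥0∞ :=
  if 0 < α then ENNReal.ofReal r ^ (-α)
  else if α = 0 then ENNReal.ofReal (Real.log (Real.exp 1 / min r 1))
  else 1

/-- The `φ_α`-energy of a measure `μ` with respect to the distance function `ρ`. -/
noncomputable def energy {X : Type*} [MeasurableSpace X] (ρ : X → X → ℝ) (α : ℝ)
    (μ : MeasureTheory.Measure X) : ℝ≥0∞ :=
  ∫⁻ u, ∫⁻ v, radialKernel α (ρ u v) ∂μ ∂μ

/-- The Bessel–Riesz capacity of order `α` of `G` with respect to the distance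
function `ρ`: the reciprocal of the infimum of `φ_α`-energies over probability
measures carried by `G` (equal to `0` if every such energy is infinite). -/
noncomputable def capacity {X : Type*} [MeasurableSpace X] (ρ : X → X → ℝ) (α : ℝ)
    (G : Set X) : ℝ≥0∞ :=
  (⨅ (μ : MeasureTheory.Measure X) (_ : MeasureTheory.IsProbabilityMeasure μ)
    (_ : μ Gᶜ = 0), energy ρ α μ)⁻¹

/-!
Cut a ball `B(v, R)` into the shells on which `max (ρ(u,v)) r` is comparable to `R / 2 ^ k`.
Only the shells with `2 ^ k < R / r` occur, and the growth bound shows that the `k`-th one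
contributes at most a constant times `(R / 2 ^ k) ^ (κ - θ)`. These bounds form a geometric
progression of ratio `2 ^ (θ - κ)`: its sum is dominated by its last term if `θ > κ`, by the number
of terms, of order `log (R / r)`, if `θ = κ`, and by its first term if `θ < κ`. These are the three
regimes of `φ_{θ-κ}`.
-/

theorem radialKernel_of_pos {α r : ℝ} (hα : 0 < α) (hr : 0 < r) :
    radialKernel α r = ENNReal.ofReal (r ^ (-α)) := by
  rw [radialKernel, if_pos hα, ENNReal.ofReal_rpow_of_pos hr]

theorem radialKernel_zero {r : ℝ} (hr : 0 < r) :
    radialKernel 0 r = ENNReal.ofReal (1 - Real.log (min r 1)) := by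
  have hmin : min r 1 ≠ 0 := (lt_min hr one_pos).ne'
  rw [radialKernel, if_neg (lt_irrefl 0), if_pos rfl,
    Real.log_div (Real.exp_ne_zero 1) hmin, Real.log_exp]

theorem radialKernel_of_neg {α : ℝ} (hα : α < 0) (r : ℝ) : radialKernel α r = 1 := by
  rw [radialKernel, if_neg hα.not_gt, if_neg hα.ne]

theorem geom_sum_succ_le_mul_pow {K : Type*} [Field K] [LinearOrder K] [IsStrictOrderedRing K]
    {q : K} (hq : 1 < q) (n : ℕ) :
    ∑ k ∈ Finset.range (n + 1), q ^ k ≤ q / (q - 1) * q ^ n := by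
  calc ∑ k ∈ Finset.range (n + 1), q ^ k = (q ^ (n + 1) - 1) / (q - 1) := geom_sum_eq hq.ne' _
    _ ≤ q ^ (n + 1) / (q - 1) :=
        div_le_div_of_nonneg_right (sub_le_self _ zero_le_one) (sub_pos.2 hq).le
    _ = q / (q - 1) * q ^ n := by ring

theorem two_rpow_pow_le_rpow_mul_rpow_neg {α R r : ℝ} {N : ℕ} (hα : 0 ≤ α) (hR : 0 ≤ R)
    (hr : 0 ≤ r) (hN : (2 : ℝ) ^ N ≤ R / r) : ((2 : ℝ) ^ α) ^ N ≤ R ^ α * r ^ (-α) := by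
  calc ((2 : ℝ) ^ α) ^ N = ((2 : ℝ) ^ N) ^ α := Real.rpow_pow_comm zero_le_two _ _
    _ ≤ (R / r) ^ α := by gcongr
    _ = R ^ α * r ^ (-α) := by rw [Real.div_rpow hR hr, Real.rpow_neg hr, div_eq_mul_inv]

theorem succ_le_mul_one_sub_log_min {R r : ℝ} {N : ℕ} (hR : 0 < R) (hr : 0 < r)
    (hN : (2 : ℝ) ^ N ≤ R / r) :
    (N + 1 : ℝ) ≤ (|Real.log R| + 1) / Real.log 2 * (1 - Real.log (min r 1)) := by
  have hlog_two : 0 < Real.log 2 := Real.log_pos one_lt_two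
  have hmin : 0 < min r 1 := lt_min hr one_pos
  have hmin_nonpos : Real.log (min r 1) ≤ 0 := Real.log_nonpos hmin.le (min_le_right _ _)
  have hmin_le : Real.log (min r 1) ≤ Real.log r := Real.log_le_log hmin (min_le_left _ _)
  have hN_log : N * Real.log 2 ≤ Real.log R - Real.log r := by
    simpa only [Real.log_pow, Real.log_div hR.ne' hr.ne'] using
      Real.log_le_log (by positivity) hN
  rw [div_mul_eq_mul_div, le_div_iff₀ hlog_two]
  calc (N + 1) * Real.log 2 ≤ |Real.log R| + (1 - Real.log (min r 1)) := by
        linarith [le_abs_self (Real.log R), Real.log_two_lt_d9]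
    _ ≤ (|Real.log R| + 1) * (1 - Real.log (min r 1)) := by
        nlinarith [abs_nonneg (Real.log R)]

theorem exists_geom_sum_le_mul_radialKernel {R : ℝ} (hR : 0 < R) (α : ℝ) :
    ∃ C : ℝ, 0 < C ∧ ∀ (r : ℝ) (N : ℕ), 0 < r → (2 : ℝ) ^ N ≤ R / r →
      ENNReal.ofReal (∑ k ∈ Finset.range (N + 1), ((2 : ℝ) ^ α) ^ k) ≤
        ENNReal.ofReal C * radialKernel α r := by
  rcases lt_trichotomy α 0 with hα | rfl | hα
  · have hq : (2 : ℝ) ^ α < 1 := Real.rpow_lt_one_of_one_lt_of_neg one_lt_two hα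
    refine ⟨(1 - (2 : ℝ) ^ α)⁻¹, inv_pos.2 (sub_pos.2 hq), fun r N _ _ => ?_⟩
    rw [radialKernel_of_neg hα, mul_one]
    apply ENNReal.ofReal_le_ofReal
    simpa only [Finset.range_eq_Ico, pow_zero, one_div] using
      geom_sum_Ico_le_of_lt_one (m := 0) (n := N + 1) (by positivity) hq
  · have hC : 0 < (|Real.log R| + 1) / Real.log 2 :=
      div_pos (by positivity) (Real.log_pos one_lt_two)
    refine ⟨_, hC, fun r N hr hN => ?_⟩
    rw [radialKernel_zero hr, ← ENNReal.ofReal_mul hC.le]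
    apply ENNReal.ofReal_le_ofReal
    simpa using succ_le_mul_one_sub_log_min hR hr hN
  · have hq : 1 < (2 : ℝ) ^ α := Real.one_lt_rpow one_lt_two hα
    have hC : 0 < (2 : ℝ) ^ α / (2 ^ α - 1) := div_pos (by positivity) (sub_pos.2 hq)
    refine ⟨(2 : ℝ) ^ α / (2 ^ α - 1) * R ^ α, mul_pos hC (by positivity), fun r N hr hN => ?_⟩
    rw [radialKernel_of_pos hα hr, ← ENNReal.ofReal_mul (by positivity), mul_assoc]
    apply ENNReal.ofReal_le_ofReal
    refine (geom_sum_succ_le_mul_pow hq N).trans ?_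
    gcongr
    exact two_rpow_pow_le_rpow_mul_rpow_neg hα.le hR.le hr.le hN

theorem exists_nat_pow_lt_le_pow_succ {K : Type*} [Field K] [LinearOrder K]
    [IsStrictOrderedRing K] [Archimedean K] {x y : K} (hx : 1 < x) (hy : 1 < y) :
    ∃ n : ℕ, y ^ n < x ∧ x ≤ y ^ (n + 1) := by
  obtain ⟨n, hlt, hle⟩ := exists_mem_Ioc_zpow (zero_lt_one.trans hx) hy
  have hn : 0 ≤ n := Int.lt_add_one_iff.1 ((one_lt_zpow_iff_right₀ hy).1 (hx.trans_le hle))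
  lift n to ℕ using hn
  exact ⟨n, mod_cast hlt, mod_cast hle⟩

theorem rpow_le_two_rpow_abs_mul_rpow {s t : ℝ} (ht : 0 < t) (hts : t / 2 ≤ s) (hst : s ≤ t)
    (β : ℝ) : s ^ β ≤ 2 ^ |β| * t ^ β := by
  rcases le_total 0 β with hβ | hβ
  · calc s ^ β ≤ t ^ β := Real.rpow_le_rpow (by linarith) hst hβ
      _ ≤ 2 ^ |β| * t ^ β :=
        le_mul_of_one_le_left (by positivity) (Real.one_le_rpow one_le_two (abs_nonneg β))
  · calc s ^ β ≤ (t / 2) ^ β := Real.rpow_le_rpow_of_nonpos (by positivity) hts hβ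
      _ = 2 ^ |β| * t ^ β := by
        rw [abs_of_nonpos hβ, Real.rpow_neg zero_le_two, Real.div_rpow ht.le zero_le_two,
          div_eq_inv_mul]

theorem div_two_pow_rpow {R : ℝ} (hR : 0 ≤ R) (β : ℝ) (k : ℕ) :
    (R / 2 ^ k) ^ β = R ^ β * ((2 : ℝ) ^ (-β)) ^ k := by
  rw [Real.div_rpow hR (by positivity), ← Real.rpow_pow_comm zero_le_two,
    Real.rpow_neg zero_le_two, inv_pow, div_eq_mul_inv]

section

variable {X : Type*} [PseudoMetricSpace X]

theorem max_dist_rpow_le_sum_indicator_ball {R r : ℝ} {N : ℕ} (hr : 0 < r) (hrR : r < R)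
    (hN : R / r ≤ 2 ^ (N + 1)) (β : ℝ) {u v : X} (hu : u ∈ Metric.ball v R) :
    ENNReal.ofReal (max (dist u v) r) ^ β ≤
      ∑ k ∈ Finset.range (N + 1), (Metric.ball v (R / 2 ^ k)).indicator
        (fun _ => ENNReal.ofReal (2 ^ |β| * (R / 2 ^ k) ^ β)) u := by
  have hR : 0 < R := hr.trans hrR
  have hdist_le : dist u v ≤ max (dist u v) r := le_max_left _ _
  have hr_le : r ≤ max (dist u v) r := le_max_right _ _
  have hlt_R : max (dist u v) r < R := max_lt hu hrR
  set s := max (dist u v) r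
  have hs : 0 < s := hr.trans_le hr_le
  obtain ⟨k, hk_lt, hk_le⟩ :=
    exists_nat_pow_lt_le_pow_succ ((one_lt_div hs).2 hlt_R) one_lt_two
  have hkN : k < N + 1 := by
    refine (pow_lt_pow_iff_right₀ (one_lt_two (α := ℝ))).1 (hk_lt.trans_le (le_trans ?_ hN))
    gcongr
  have hs_lt : s < R / 2 ^ k := (lt_div_comm₀ (by positivity) hs).1 hk_lt
  have hs_ge : R / 2 ^ k / 2 ≤ s := by
    rw [div_div, ← pow_succ]
    exact (div_le_comm₀ hs (by positivity)).1 hk_le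
  have hu_mem : u ∈ Metric.ball v (R / 2 ^ k) := hdist_le.trans_lt hs_lt
  calc ENNReal.ofReal s ^ β
      ≤ ENNReal.ofReal (2 ^ |β| * (R / 2 ^ k) ^ β) := by
        rw [ENNReal.ofReal_rpow_of_pos hs]
        exact ENNReal.ofReal_le_ofReal
          (rpow_le_two_rpow_abs_mul_rpow (by positivity) hs_ge hs_lt.le β)
    _ = (Metric.ball v (R / 2 ^ k)).indicator
          (fun _ => ENNReal.ofReal (2 ^ |β| * (R / 2 ^ k) ^ β)) u := by
        rw [indicator_of_mem hu_mem]
    _ ≤ _ := Finset.single_le_sum (f := fun j : ℕ => (Metric.ball v (R / 2 ^ j)).indicator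
          (fun _ => ENNReal.ofReal (2 ^ |β| * (R / 2 ^ j) ^ β)) u)
          (fun _ _ => zero_le) (Finset.mem_range.2 hkN)

variable [MeasurableSpace X] [OpensMeasurableSpace X]

theorem setLIntegral_max_dist_rpow_le_sum (μ : Measure X) {R r : ℝ} {N : ℕ} (hr : 0 < r)
    (hrR : r < R) (hN : R / r ≤ 2 ^ (N + 1)) (β : ℝ) (v : X) :
    ∫⁻ u in Metric.ball v R, ENNReal.ofReal (max (dist u v) r) ^ β ∂μ ≤
      ∑ k ∈ Finset.range (N + 1),
        ENNReal.ofReal (2 ^ |β| * (R / 2 ^ k) ^ β) * μ (Metric.ball v (R / 2 ^ k)) := by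
  calc ∫⁻ u in Metric.ball v R, ENNReal.ofReal (max (dist u v) r) ^ β ∂μ
      ≤ ∫⁻ u in Metric.ball v R, ∑ k ∈ Finset.range (N + 1),
          (Metric.ball v (R / 2 ^ k)).indicator
            (fun _ => ENNReal.ofReal (2 ^ |β| * (R / 2 ^ k) ^ β)) u ∂μ :=
        setLIntegral_mono' measurableSet_ball fun _ hu =>
          max_dist_rpow_le_sum_indicator_ball hr hrR hN β hu
    _ ≤ ∫⁻ u, ∑ k ∈ Finset.range (N + 1), (Metric.ball v (R / 2 ^ k)).indicator
          (fun _ => ENNReal.ofReal (2 ^ |β| * (R / 2 ^ k) ^ β)) u ∂μ :=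
        setLIntegral_le_lintegral _ _
    _ = _ := by
        rw [lintegral_finsetSum _ fun _ _ => measurable_const.indicator measurableSet_ball]
        simp only [lintegral_indicator_const measurableSet_ball]

theorem setLIntegral_max_dist_rpow_neg_le_geom_sum {μ : Measure X} {R r C₁ κ : ℝ} {N : ℕ} {v : X}
    (hC₁ : 0 ≤ C₁) (hr : 0 < r) (hrR : r < R) (hN : R / r ≤ 2 ^ (N + 1))
    (hball : ∀ t : ℝ, 0 < t → t ≤ R → μ (Metric.ball v t) ≤ ENNReal.ofReal (C₁ * t ^ κ))
    (θ : ℝ) :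
    ∫⁻ u in Metric.ball v R, ENNReal.ofReal (max (dist u v) r) ^ (-θ) ∂μ ≤
      ENNReal.ofReal (2 ^ |θ| * C₁ * R ^ (κ - θ)) *
        ENNReal.ofReal (∑ k ∈ Finset.range (N + 1), ((2 : ℝ) ^ (θ - κ)) ^ k) := by
  have hR : 0 < R := hr.trans hrR
  rw [← ENNReal.ofReal_mul (by positivity), Finset.mul_sum,
    ENNReal.ofReal_sum_of_nonneg fun k _ => by positivity]
  refine (setLIntegral_max_dist_rpow_le_sum μ hr hrR hN (-θ) v).trans
    (Finset.sum_le_sum fun k _ => ?_)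
  have hRk : 0 < R / 2 ^ k := by positivity
  have hRk_le : R / 2 ^ k ≤ R := div_le_self hR.le (one_le_pow₀ one_le_two)
  calc ENNReal.ofReal (2 ^ |-θ| * (R / 2 ^ k) ^ (-θ)) * μ (Metric.ball v (R / 2 ^ k))
      ≤ ENNReal.ofReal (2 ^ |-θ| * (R / 2 ^ k) ^ (-θ)) *
          ENNReal.ofReal (C₁ * (R / 2 ^ k) ^ κ) := by gcongr; exact hball _ hRk hRk_le
    _ = ENNReal.ofReal (2 ^ |θ| * C₁ * (R / 2 ^ k) ^ (κ - θ)) := by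
        rw [← ENNReal.ofReal_mul (by positivity), abs_neg, sub_eq_neg_add, Real.rpow_add hRk]
        ring_nf
    _ = ENNReal.ofReal (2 ^ |θ| * C₁ * R ^ (κ - θ) * ((2 : ℝ) ^ (θ - κ)) ^ k) := by
        rw [div_two_pow_rpow hR.le, neg_sub, mul_assoc _ (R ^ (κ - θ))]

theorem statement0_general {C₁ R : ℝ} (hC₁ : 0 < C₁) (hR : 0 < R) (κ θ : ℝ) :
    ∃ C₂ : ℝ, 0 < C₂ ∧ ∀ (μ : Measure X) (v : X),
      (∀ t : ℝ, 0 < t → t ≤ R → μ (Metric.ball v t) ≤ ENNReal.ofReal (C₁ * t ^ κ)) →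
      ∀ r : ℝ, 0 < r → r < R →
        ∫⁻ u in Metric.ball v R, ENNReal.ofReal (max (dist u v) r) ^ (-θ) ∂μ ≤
          ENNReal.ofReal C₂ * radialKernel (θ - κ) r := by
  obtain ⟨C, hC, hgeom⟩ := exists_geom_sum_le_mul_radialKernel hR (θ - κ)
  refine ⟨2 ^ |θ| * C₁ * R ^ (κ - θ) * C, by positivity, fun μ v hball r hr hrR => ?_⟩
  obtain ⟨N, hN_lt, hN_le⟩ := exists_nat_pow_lt_le_pow_succ ((one_lt_div hr).2 hrR) one_lt_two
  rw [ENNReal.ofReal_mul (by positivity), mul_assoc]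
  refine (setLIntegral_max_dist_rpow_neg_le_geom_sum hC₁.le hr hrR hN_le hball θ).trans ?_
  gcongr
  exact hgeom r N hr hN_lt.le

end

theorem ball_eq_univ_of_diam_lt {X : Type*} [PseudoMetricSpace X]
    (hX : Bornology.IsBounded (univ : Set X)) {R : ℝ} (hR : Metric.diam (univ : Set X) < R)
    (v : X) : Metric.ball v R = univ :=
  eq_univ_of_forall fun _ =>
    (Metric.dist_le_diam_of_mem hX (mem_univ _) (mem_univ _)).trans_lt hR

/-- If `(X,ρ)` is a bounded metric space and `μ` a Borel probability
measure on `X` with `μ(B(u,r)) ≤ C₁ r^κ` for all `u` and `r > 0`, then for every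
`θ > 0` there is `C₂ > 0` with
`sup_v ∫ (max(ρ(u,v), r))^{-θ} dμ(u) ≤ C₂ φ_{θ-κ}(r)` for all `0 < r < diam X`. -/
theorem statement0 {X : Type*} [MetricSpace X] [MeasurableSpace X] [BorelSpace X]
    (hX : Bornology.IsBounded (Set.univ : Set X))
    (μ : Measure X) [IsProbabilityMeasure μ]
    (C₁ κ : ℝ) (hC₁ : 0 < C₁) (hκ : 0 < κ)
    (hball : ∀ u : X, ∀ r : ℝ, 0 < r → μ (Metric.ball u r) ≤ ENNReal.ofReal (C₁ * r ^ κ))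
    (θ : ℝ) (hθ : 0 < θ) :
    ∃ C₂ : ℝ, 0 < C₂ ∧ ∀ r : ℝ, 0 < r → r < Metric.diam (Set.univ : Set X) →
      ∀ v : X, ∫⁻ u, (ENNReal.ofReal (max (dist u v) r)) ^ (-θ) ∂μ ≤
        ENNReal.ofReal C₂ * radialKernel (θ - κ) r := by
  obtain ⟨C₂, hC₂, hint⟩ := statement0_general (X := X) hC₁
    (Metric.diam_nonneg.trans_lt (lt_add_one (Metric.diam (univ : Set X)))) κ θ
  refine ⟨C₂, hC₂, fun r hr hrD v => ?_⟩
  simpa only [ball_eq_univ_of_diam_lt hX (lt_add_one _) v, Measure.restrict_univ] using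
    hint μ v (fun t ht _ => hball v t ht) r hr (hrD.trans (lt_add_one _))
end

section
/- Let (X₁,ρ₁) and (X₂,ρ₂) be bounded metric spaces and let ρ₃ be the metric on X₁ × X₂ given by ρ₃((u,x),(v,y)) = max{ρ₁(u,v), ρ₂(x,y)}. Let α > 0, Gᵢ ⊆ Xᵢ for i = 1,2, and assume G₁ is γ₁-Ahlfors–David regular. If γ₁ < α, then there exists a constant c > 0 such that ℋ^{α}_{ρ₃}(G₁ × G₂) ≤ c · ℋ^{α−γ₁}_{ρ₂}(G₂). -/
open MeasureTheory Set ENNReal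

/-- The `β`-dimensional Hausdorff measure of `G` with respect to the distance
function `ρ`, defined via countable coverings by `ρ`-balls of radii at most `δ`,
letting `δ → 0` (i.e. taking the supremum over `δ > 0`). -/
noncomputable def hMeasure {X : Type*} (ρ : X → X → ℝ) (β : ℝ) (G : Set X) : ℝ≥0∞ :=
  ⨆ (δ : ℝ) (_ : 0 < δ), ⨅ (c : ℕ → X) (r : ℕ → ℝ)
    (_ : ∀ n, 0 < r n ∧ r n ≤ δ) (_ : G ⊆ ⋃ n, {y | ρ y (c n) < r n}),
    ∑' n, ENNReal.ofReal ((2 * r n) ^ β)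

/-- `G` is `γ`-Ahlfors–David regular: there is a finite positive Borel measure `μ`
supported on `G` and a constant `c ≥ 1` such that
`c⁻¹ r^γ ≤ μ(B(a,r)) ≤ c r^γ` for all `a ∈ G` and `0 < r ≤ 1`. -/
def AhlforsRegular {X : Type*} [MetricSpace X] [MeasurableSpace X] (γ : ℝ)
    (G : Set X) : Prop :=
  ∃ (μ : MeasureTheory.Measure X) (c : ℝ), 1 ≤ c ∧ μ ≠ 0 ∧
    MeasureTheory.IsFiniteMeasure μ ∧ μ Gᶜ = 0 ∧
    ∀ a ∈ G, ∀ r : ℝ, 0 < r → r ≤ 1 →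
      ENNReal.ofReal (c⁻¹ * r ^ γ) ≤ μ (Metric.ball a r) ∧
      μ (Metric.ball a r) ≤ ENNReal.ofReal (c * r ^ γ)

/-!
An Ahlfors–David regular set `G₁` is covered by at most a constant times `ε ^ (-γ₁)` balls of
radius `ε`, because the disjoint balls of radius `ε / 2` around an `ε`-separated subset each have
measure at least a constant times `ε ^ γ₁`, while the total measure is finite. Given a covering of
`G₂`, the product of `G₁` with a ball of radius `r` is covered by about `r ^ (-γ₁)` product balls of
the same radius, which contribute about `r ^ (-γ₁) * r ^ α = r ^ (α - γ₁)`.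
-/

open Metric
open scoped NNReal

section PackingAndCovering

variable {X : Type*} [MeasurableSpace X]

theorem encard_mul_le_measure_univ_of_isSeparated [PseudoEMetricSpace X] [OpensMeasurableSpace X]
    (μ : Measure X) {ε m : ℝ≥0∞} {C : Set X} (hC : IsSeparated ε C)
    (hm : ∀ a ∈ C, m ≤ μ (eball a (ε / 2))) :
    (C.encard : ℝ≥0∞) * m ≤ μ univ := by
  have hdisj : Pairwise (Function.onFun Disjoint fun a : C ↦ eball (a : X) (ε / 2)) := by
    intro a b hab
    apply eball_disjoint
    rw [ENNReal.add_halves]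
    exact (hC a.2 b.2 (Subtype.coe_injective.ne hab)).le
  calc (C.encard : ℝ≥0∞) * m = ∑' _ : C, m := (ENNReal.tsum_set_const C m).symm
    _ ≤ ∑' a : C, μ (eball (a : X) (ε / 2)) := ENNReal.tsum_le_tsum fun a ↦ hm a a.2
    _ ≤ μ (⋃ a : C, eball (a : X) (ε / 2)) :=
      tsum_meas_le_meas_iUnion_of_disjoint μ (fun _ ↦ isOpen_eball.measurableSet) hdisj
    _ ≤ μ univ := measure_mono (subset_univ _)

theorem packingNumber_mul_le_measure_univ [PseudoEMetricSpace X] [OpensMeasurableSpace X]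
    (μ : Measure X) {ε : ℝ≥0} {m : ℝ≥0∞} {A : Set X} (hm : ∀ a ∈ A, m ≤ μ (eball a (ε / 2))) :
    (packingNumber ε A : ℝ≥0∞) * m ≤ μ univ := by
  simp only [packingNumber, ENat.toENNReal_iSup, ENNReal.iSup_mul, iSup_le_iff]
  exact fun C hCA hC ↦ encard_mul_le_measure_univ_of_isSeparated μ hC fun a ha ↦ hm a (hCA ha)

variable [MetricSpace X] {γ : ℝ} {G : Set X}

theorem AhlforsRegular.nonempty (hG : AhlforsRegular γ G) : G.Nonempty := by
  obtain ⟨μ, -, -, hμ, -, hμG, -⟩ := hG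
  by_contra! hempty
  rw [hempty, compl_empty] at hμG
  exact hμ (Measure.measure_univ_eq_zero.mp hμG)

theorem AhlforsRegular.exists_coveringNumber_mul_rpow_le [OpensMeasurableSpace X]
    (hG : AhlforsRegular γ G) :
    ∃ K : ℝ≥0, ∀ ε : ℝ≥0, 0 < ε → ε ≤ 1 → (coveringNumber ε G : ℝ≥0∞) * ε ^ γ ≤ K := by
  obtain ⟨μ, c, hc, -, hfin, -, hball⟩ := hG
  have : 0 < c := one_pos.trans_le hc
  refine ⟨(ENNReal.ofReal (c * 2 ^ γ) * μ univ).toNNReal, fun ε hε hε1 ↦ ?_⟩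
  rw [coe_toNNReal (mul_ne_top ofReal_ne_top (measure_ne_top μ univ))]
  have hball_half : ∀ a ∈ G, ENNReal.ofReal (c⁻¹ * (ε / 2) ^ γ) ≤ μ (eball a (ε / 2)) := by
    intro a ha
    have hhalf : (ε / 2 : ℝ≥0∞) = ENNReal.ofReal (ε / 2) := by
      rw [ofReal_div_of_pos two_pos, ofReal_coe_nnreal, ofReal_ofNat]
    rw [hhalf, eball_ofReal]
    exact (hball a ha (ε / 2) (by positivity) (by have : (ε : ℝ) ≤ 1 := hε1; linarith)).1
  have hpow : (ε : ℝ≥0∞) ^ γ =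
      ENNReal.ofReal (c * 2 ^ γ) * ENNReal.ofReal (c⁻¹ * (ε / 2) ^ γ) := by
    rw [← ofReal_mul (by positivity), ← ofReal_coe_nnreal,
      ofReal_rpow_of_pos (by exact_mod_cast hε), Real.div_rpow ε.coe_nonneg zero_le_two]
    congr 1
    field_simp
  calc (coveringNumber ε G : ℝ≥0∞) * ε ^ γ ≤ packingNumber ε G * ε ^ γ := by
        gcongr
        exact coveringNumber_le_packingNumber ε G
    _ = ENNReal.ofReal (c * 2 ^ γ) *
        (packingNumber ε G * ENNReal.ofReal (c⁻¹ * (ε / 2) ^ γ)) := by rw [hpow, mul_left_comm]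
    _ ≤ ENNReal.ofReal (c * 2 ^ γ) * μ univ := by
        gcongr
        exact packingNumber_mul_le_measure_univ μ hball_half

end PackingAndCovering

section Content

variable {X : Type*} {ρ : X → X → ℝ} {β δ : ℝ} {G : Set X}

/-- The `β`-dimensional Hausdorff content of `G` at scale `δ`: the infimum of `∑ (2 r) ^ β` over
coverings of `G` by sequences of `ρ`-balls of radii `r ≤ δ`. The Hausdorff measure `hMeasure` is its
supremum over `δ > 0`. As in `hMeasure`, the balls are indexed by `ℕ` and all radii are positive. -/
noncomputable def hContent (ρ : X → X → ℝ) (β δ : ℝ) (G : Set X) : ℝ≥0∞ :=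
  ⨅ (c : ℕ → X) (r : ℕ → ℝ) (_ : ∀ n, 0 < r n ∧ r n ≤ δ) (_ : G ⊆ ⋃ n, {y | ρ y (c n) < r n}),
    ∑' n, ENNReal.ofReal ((2 * r n) ^ β)

theorem hContent_le_hMeasure (hδ : 0 < δ) : hContent ρ β δ G ≤ hMeasure ρ β G :=
  le_iSup₂_of_le δ hδ le_rfl

theorem hMeasure_le {M : ℝ≥0∞} (h : ∀ δ, 0 < δ → hContent ρ β δ G ≤ M) : hMeasure ρ β G ≤ M :=
  iSup₂_le h

theorem hContent_anti {δ' : ℝ} (h : δ ≤ δ') : hContent ρ β δ' G ≤ hContent ρ β δ G :=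
  le_iInf₂ fun c r ↦ le_iInf₂ fun hr hcov ↦
    iInf₂_le_of_le c r <| iInf₂_le_of_le (fun n ↦ ⟨(hr n).1, (hr n).2.trans h⟩) hcov le_rfl

theorem hContent_le_tsum {ι : Type*} [Countable ι] [Infinite ι] {c : ι → X} {r : ι → ℝ}
    (hr : ∀ i, 0 < r i ∧ r i ≤ δ) (hcov : G ⊆ ⋃ i, {y | ρ y (c i) < r i}) :
    hContent ρ β δ G ≤ ∑' i, ENNReal.ofReal ((2 * r i) ^ β) := by
  obtain ⟨e⟩ : Nonempty (ℕ ≃ ι) := nonempty_equiv_of_countable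
  rw [← e.tsum_eq]
  refine iInf₂_le_of_le (c ∘ e) (r ∘ e) <| iInf₂_le_of_le (fun n ↦ hr (e n)) ?_ le_rfl
  exact hcov.trans_eq (e.surjective.iUnion_comp _).symm

end Content

section Product

variable {X₁ X₂ : Type*} [PseudoMetricSpace X₁] {ρ₂ : X₂ → X₂ → ℝ} {G₁ : Set X₁} {G₂ : Set X₂}

theorem hContent_prod_le_tsum (hG₁ : G₁.Nonempty) {α δ : ℝ} {c : ℕ → X₂} {r : ℕ → ℝ} {ε : ℕ → ℝ≥0}
    (hr : ∀ n, 0 < r n ∧ r n ≤ δ) (hcov : G₂ ⊆ ⋃ n, {y | ρ₂ y (c n) < r n})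
    (hεr : ∀ n, ε n < r n) (hε : ∀ n, coveringNumber (ε n) G₁ ≠ ⊤) :
    hContent (fun p q : X₁ × X₂ ↦ max (dist p.1 q.1) (ρ₂ p.2 q.2)) α δ (G₁ ×ˢ G₂) ≤
      ∑' n, (coveringNumber (ε n) G₁ : ℝ≥0∞) * ENNReal.ofReal ((2 * r n) ^ α) := by
  let C n := minimalCover (ε n) G₁
  have hC n : IsCover (ε n) G₁ (C n) := isCover_minimalCover (hε n)
  have (n : ℕ) : Nonempty (C n) := ((hC n).nonempty hG₁).to_subtype
  have (n : ℕ) : Finite (C n) := finite_minimalCover.to_subtype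
  have hprod : G₁ ×ˢ G₂ ⊆ ⋃ i : Σ n, C n,
      {p | max (dist p.1 (i.2 : X₁)) (ρ₂ p.2 (c i.1)) < r i.1} := by
    rintro ⟨x, y⟩ ⟨hx, hy⟩
    obtain ⟨n, hyn⟩ := mem_iUnion.mp (hcov hy)
    obtain ⟨a, ha, hxa⟩ := mem_iUnion₂.mp ((hC n).subset_iUnion_closedBall hx)
    exact mem_iUnion.mpr ⟨⟨n, a, ha⟩, max_lt (hxa.trans_lt (hεr n)) hyn⟩
  calc hContent (fun p q : X₁ × X₂ ↦ max (dist p.1 q.1) (ρ₂ p.2 q.2)) α δ (G₁ ×ˢ G₂)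
      ≤ ∑' i : Σ n, C n, ENNReal.ofReal ((2 * r i.1) ^ α) :=
        hContent_le_tsum (c := fun i : Σ n, C n ↦ ((i.2 : X₁), c i.1)) (fun i ↦ hr i.1) hprod
    _ = ∑' n, (coveringNumber (ε n) G₁ : ℝ≥0∞) * ENNReal.ofReal ((2 * r n) ^ α) := by
        simp only [ENNReal.tsum_sigma', ENNReal.tsum_set_const, C, encard_minimalCover (hε _)]

variable {γ : ℝ} {K : ℝ≥0}

theorem coveringNumber_ne_top_of_mul_rpow_le {ε : ℝ≥0} (hε : 0 < ε)
    (hK : (coveringNumber ε G₁ : ℝ≥0∞) * ε ^ γ ≤ K) : coveringNumber ε G₁ ≠ ⊤ := by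
  intro htop
  have hpow : (ε : ℝ≥0∞) ^ γ ≠ 0 := (rpow_pos (by exact_mod_cast hε) coe_ne_top).ne'
  rw [htop, ENat.toENNReal_top, top_mul hpow] at hK
  exact coe_ne_top (top_le_iff.mp hK)

theorem pos_of_coveringNumber_mul_rpow_le (hG₁ : G₁.Nonempty) {ε : ℝ≥0} (hε : 0 < ε)
    (hK : (coveringNumber ε G₁ : ℝ≥0∞) * ε ^ γ ≤ K) : 0 < K := by
  have hpow : (0 : ℝ≥0∞) < ε ^ γ := rpow_pos (by exact_mod_cast hε) coe_ne_top
  have hpos : (0 : ℝ≥0∞) < coveringNumber ε G₁ := by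
    exact_mod_cast coveringNumber_pos_iff.mpr hG₁
  exact_mod_cast (ENNReal.mul_pos hpos.ne' hpow.ne').trans_le hK

theorem coveringNumber_mul_rpow_four_mul_le (α : ℝ) {ε : ℝ≥0} (hε : 0 < ε)
    (hK : (coveringNumber ε G₁ : ℝ≥0∞) * ε ^ γ ≤ K) :
    (coveringNumber ε G₁ : ℝ≥0∞) * (4 * ε) ^ α ≤ ↑(K * 4 ^ γ) * (4 * ε) ^ (α - γ) := by
  have hsplit : (4 * ε : ℝ≥0∞) ^ α = ε ^ γ * (4 ^ γ * (4 * ε) ^ (α - γ)) := by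
    rw [← mul_assoc, mul_comm (_ ^ γ), ← ENNReal.mul_rpow_of_ne_top (by simp) coe_ne_top,
      ← ENNReal.rpow_add _ _ (by simpa using hε.ne') (mul_ne_top (by simp) coe_ne_top),
      add_sub_cancel]
  calc (coveringNumber ε G₁ : ℝ≥0∞) * (4 * ε) ^ α
      = (coveringNumber ε G₁ * ε ^ γ) * (4 ^ γ * (4 * ε) ^ (α - γ)) := by rw [hsplit, mul_assoc]
    _ ≤ K * (4 ^ γ * (4 * ε) ^ (α - γ)) := by gcongr
    _ = ↑(K * 4 ^ γ) * (4 * ε) ^ (α - γ) := by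
      rw [ENNReal.coe_mul, ENNReal.coe_rpow_of_ne_zero four_ne_zero, coe_ofNat, mul_assoc]

theorem hContent_prod_le (α : ℝ) {δ : ℝ} (hδ : δ ≤ 1) (hG₁ : G₁.Nonempty)
    (hK : ∀ ε : ℝ≥0, 0 < ε → ε ≤ 1 → (coveringNumber ε G₁ : ℝ≥0∞) * ε ^ γ ≤ K) :
    hContent (fun p q : X₁ × X₂ ↦ max (dist p.1 q.1) (ρ₂ p.2 q.2)) α δ (G₁ ×ˢ G₂) ≤
      ↑(K * 4 ^ γ) * hContent ρ₂ (α - γ) δ G₂ := by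
  have hKpos : 0 < K := pos_of_coveringNumber_mul_rpow_le hG₁ one_pos (hK 1 one_pos le_rfl)
  have hD : ((K * 4 ^ γ : ℝ≥0) : ℝ≥0∞) ≠ 0 := by
    exact_mod_cast (mul_pos hKpos (NNReal.rpow_pos four_pos)).ne'
  rw [hContent.eq_def ρ₂]
  simp only [ENNReal.mul_iInf_of_ne hD coe_ne_top]
  refine le_iInf₂ fun c r ↦ le_iInf₂ fun hr hcov ↦ ?_
  -- Mathlib's coverings are by closed balls, so the radius is halved to fit into open ones.
  let ε n := (r n / 2).toNNReal
  have hεval n : (ε n : ℝ) = r n / 2 := Real.coe_toNNReal _ (half_pos (hr n).1).le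
  have hεpos n : 0 < ε n := Real.toNNReal_pos.mpr (half_pos (hr n).1)
  have hεlt n : ε n < r n := (hεval n).trans_lt (half_lt_self (hr n).1)
  have hKε n : (coveringNumber (ε n) G₁ : ℝ≥0∞) * ε n ^ γ ≤ K :=
    hK (ε n) (hεpos n) (by exact_mod_cast (hεlt n).le.trans ((hr n).2.trans hδ))
  have hpow n (s : ℝ) : ENNReal.ofReal ((2 * r n) ^ s) = (4 * ε n) ^ s := by
    rw [← ofReal_rpow_of_pos (mul_pos two_pos (hr n).1), ← ofReal_coe_nnreal, ← ofReal_ofNat 4,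
      ← ofReal_mul zero_le_four, hεval]
    ring_nf
  calc hContent (fun p q : X₁ × X₂ ↦ max (dist p.1 q.1) (ρ₂ p.2 q.2)) α δ (G₁ ×ˢ G₂)
      ≤ ∑' n, (coveringNumber (ε n) G₁ : ℝ≥0∞) * ENNReal.ofReal ((2 * r n) ^ α) :=
        hContent_prod_le_tsum hG₁ hr hcov hεlt fun n ↦
          coveringNumber_ne_top_of_mul_rpow_le (hεpos n) (hKε n)
    _ ≤ ∑' n, ↑(K * 4 ^ γ) * ENNReal.ofReal ((2 * r n) ^ (α - γ)) := by
        simp only [hpow]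
        exact ENNReal.tsum_le_tsum fun n ↦
          coveringNumber_mul_rpow_four_mul_le α (hεpos n) (hKε n)
    _ = ↑(K * 4 ^ γ) * ∑' n, ENNReal.ofReal ((2 * r n) ^ (α - γ)) := ENNReal.tsum_mul_left

theorem hMeasure_prod_le (α : ℝ) (G₂ : Set X₂) (hG₁ : G₁.Nonempty)
    (hK : ∀ ε : ℝ≥0, 0 < ε → ε ≤ 1 → (coveringNumber ε G₁ : ℝ≥0∞) * ε ^ γ ≤ K) :
    hMeasure (fun p q : X₁ × X₂ ↦ max (dist p.1 q.1) (ρ₂ p.2 q.2)) α (G₁ ×ˢ G₂) ≤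
      ↑(K * 4 ^ γ) * hMeasure ρ₂ (α - γ) G₂ := by
  refine hMeasure_le fun δ hδ ↦ ?_
  calc hContent (fun p q : X₁ × X₂ ↦ max (dist p.1 q.1) (ρ₂ p.2 q.2)) α δ (G₁ ×ˢ G₂)
      ≤ hContent (fun p q : X₁ × X₂ ↦ max (dist p.1 q.1) (ρ₂ p.2 q.2)) α (min δ 1) (G₁ ×ˢ G₂) :=
        hContent_anti (min_le_left δ 1)
    _ ≤ ↑(K * 4 ^ γ) * hContent ρ₂ (α - γ) (min δ 1) G₂ :=
        hContent_prod_le α (min_le_right δ 1) hG₁ hK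
    _ ≤ ↑(K * 4 ^ γ) * hMeasure ρ₂ (α - γ) G₂ := by
        gcongr
        exact hContent_le_hMeasure (lt_min hδ one_pos)

end Product

theorem statement5_general {X₁ X₂ : Type*} [MetricSpace X₁] [MeasurableSpace X₁]
    [OpensMeasurableSpace X₁] (ρ₂ : X₂ → X₂ → ℝ) (α : ℝ) {G₁ : Set X₁} (G₂ : Set X₂) {γ₁ : ℝ}
    (hreg : AhlforsRegular γ₁ G₁) :
    ∃ c : ℝ, 0 < c ∧
      hMeasure (fun p q : X₁ × X₂ ↦ max (dist p.1 q.1) (ρ₂ p.2 q.2)) α (G₁ ×ˢ G₂) ≤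
        ENNReal.ofReal c * hMeasure ρ₂ (α - γ₁) G₂ := by
  obtain ⟨K, hK⟩ := hreg.exists_coveringNumber_mul_rpow_le
  have hKpos : 0 < K :=
    pos_of_coveringNumber_mul_rpow_le hreg.nonempty one_pos (hK 1 one_pos le_rfl)
  refine ⟨(K * 4 ^ γ₁ : ℝ≥0), by positivity, ?_⟩
  rw [ofReal_coe_nnreal]
  exact hMeasure_prod_le α G₂ hreg.nonempty hK

/-- If `G₁` is `γ₁`-Ahlfors–David regular with `0 < γ₁ < α`, then
`ℋ^{α}_{ρ₃}(G₁ × G₂) ≤ c ℋ^{α-γ₁}_{ρ₂}(G₂)`. -/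
theorem statement5 {X₁ X₂ : Type*} [MetricSpace X₁] [MetricSpace X₂]
    [MeasurableSpace X₁] [BorelSpace X₁]
    (hX₁ : Bornology.IsBounded (Set.univ : Set X₁))
    (hX₂ : Bornology.IsBounded (Set.univ : Set X₂))
    (α : ℝ) (hα : 0 < α) (G₁ : Set X₁) (G₂ : Set X₂)
    (γ₁ : ℝ) (hγ₁ : 0 < γ₁) (hreg : AhlforsRegular γ₁ G₁) (hγα : γ₁ < α) :
    ∃ c : ℝ, 0 < c ∧
      hMeasure (fun p q : X₁ × X₂ => max (dist p.1 q.1) (dist p.2 q.2)) α (G₁ ×ˢ G₂) ≤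
        ENNReal.ofReal c * hMeasure (fun x y : X₂ => dist x y) (α - γ₁) G₂ :=
  statement5_general (fun x y ↦ dist x y) α G₂ hreg
end
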